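/- arXiv:2510.18380 — 4 statements merged into one kernel-verified Lean document; each statement's English description precedes it below -/
import Mathlib

section
/- Let N ∈ ℕ and let M₀, …, M_{2N} ∈ ℝ be such that the (N+1)×(N+1) Hankel matrix H_N with (j,k) entry M_{j+k} (0 ≤ j, k ≤ N) is positive definite. Then there exists a nonnegative finite Borel measure μ on ℝ such that ∫_ℝ x^k dμ(x) = M_k for every k = 0, …, 2N. -/
open MeasureTheory

/-!
A positive definite matrix `H` and a Hermitian matrix `K` can be written as `H = Gᴴ G` and
`K = Gᴴ D G` with `G` invertible and `D` real diagonal. Take for `H` the Hankel matrix of `a`, and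
for `K` that of the shifted sequence `k ↦ a (k + 1)`. Column `j` of `K` is column `j + 1` of `H`;
cancelling `Gᴴ`, column `j + 1` of `G` is `D` times column `j`. So `G` is a row-scaled Vandermonde
matrix, and `H = Gᴴ G` says that the measure with mass `G i 0 ^ 2` at `D i i` has moments `a k`.
The odd moment `a (2 * N + 1)` occurs only in `K` and may be chosen arbitrarily.
-/

section SimultaneousDiagonalization

open Matrix
open scoped ComplexOrder MatrixOrder Matrix.Norms.L2Operator

variable {n 𝕜 : Type*} [Fintype n] [DecidableEq n] [RCLike 𝕜]

theorem exists_isUnit_conjTranspose_mul_self_eq_of_posDef {H : Matrix n n 𝕜} (hH : H.PosDef) :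
    ∃ B : Matrix n n 𝕜, IsUnit B ∧ Bᴴ * B = H := by
  obtain ⟨B, hB, rfl⟩ :=
    CStarAlgebra.isStrictlyPositive_iff_eq_star_mul_self.mp hH.isStrictlyPositive
  exact ⟨B, hB, rfl⟩

theorem exists_conjTranspose_mul_diagonal_mul_eq_of_isHermitian {C : Matrix n n 𝕜}
    (hC : C.IsHermitian) :
    ∃ (V : Matrix n n 𝕜) (d : n → ℝ), Vᴴ * V = 1 ∧ Vᴴ * diagonal (RCLike.ofReal ∘ d) * V = C := by
  refine ⟨(hC.eigenvectorUnitary : Matrix n n 𝕜)ᴴ, hC.eigenvalues, ?_, ?_⟩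
  · rw [conjTranspose_conjTranspose]
    exact Unitary.mul_star_self_of_mem hC.eigenvectorUnitary.2
  · rw [conjTranspose_conjTranspose]
    exact hC.spectral_theorem.symm

theorem exists_simultaneous_diagonalization_of_posDef {H K : Matrix n n 𝕜} (hH : H.PosDef)
    (hK : K.IsHermitian) :
    ∃ (G : Matrix n n 𝕜) (d : n → ℝ),
      IsUnit G ∧ Gᴴ * G = H ∧ Gᴴ * diagonal (RCLike.ofReal ∘ d) * G = K := by
  obtain ⟨B, hB, hBH⟩ := exists_isUnit_conjTranspose_mul_self_eq_of_posDef hH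
  obtain ⟨V, d, hV, hVK⟩ :=
    exists_conjTranspose_mul_diagonal_mul_eq_of_isHermitian
      (isHermitian_conjTranspose_mul_mul B⁻¹ hK)
  have hB' : B⁻¹ * B = 1 := nonsing_inv_mul B ((isUnit_iff_isUnit_det B).mp hB)
  refine ⟨V * B, d, (IsUnit.of_mul_eq_one_right _ hV).mul hB, ?_, ?_⟩
  · calc (V * B)ᴴ * (V * B) = Bᴴ * (Vᴴ * V) * B := by
          simp only [conjTranspose_mul, Matrix.mul_assoc]
      _ = H := by rw [hV, Matrix.mul_one, hBH]
  · calc (V * B)ᴴ * diagonal (RCLike.ofReal ∘ d) * (V * B)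
        = Bᴴ * (Vᴴ * diagonal (RCLike.ofReal ∘ d) * V) * B := by
          simp only [conjTranspose_mul, Matrix.mul_assoc]
      _ = (B⁻¹ * B)ᴴ * K * (B⁻¹ * B) := by
          rw [hVK]; simp only [conjTranspose_mul, Matrix.mul_assoc]
      _ = K := by rw [hB', conjTranspose_one, Matrix.one_mul, Matrix.mul_one]

end SimultaneousDiagonalization

section Hankel

open Matrix

variable {R : Type*}

/-- The `n × n` Hankel matrix of a sequence. The sequence is indexed by all of `ℕ`, although only
its first `2 * n - 1` terms matter, so that shifting it is `fun k ↦ a (k + 1)`. -/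
def hankel (n : ℕ) (a : ℕ → R) : Matrix (Fin n) (Fin n) R :=
  .of fun j k ↦ a (j + k)

theorem hankel_apply (n : ℕ) (a : ℕ → R) (j k : Fin n) : hankel n a j k = a (j + k) :=
  rfl

theorem isHermitian_hankel [Star R] [TrivialStar R] (n : ℕ) (a : ℕ → R) :
    (hankel n a).IsHermitian := by
  ext j k
  simp only [conjTranspose_apply, hankel_apply, star_trivial, add_comm]

theorem hankel_shift_apply_castSucc {n : ℕ} (a : ℕ → R) (l : Fin (n + 1)) (j : Fin n) :
    hankel (n + 1) (fun k ↦ a (k + 1)) l j.castSucc = hankel (n + 1) a l j.succ := by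
  simp only [hankel_apply, Fin.val_castSucc, Fin.val_succ, add_assoc]

theorem apply_eq_pow_mul_of_succ_eq_mul [Monoid R] {n : ℕ} {u : Fin (n + 1) → R} {q : R}
    (hu : ∀ j : Fin n, u j.succ = q * u j.castSucc) (j : Fin (n + 1)) :
    u j = q ^ (j : ℕ) * u 0 := by
  induction j using Fin.induction with
  | zero => simp
  | succ j ih => rw [hu, ih, Fin.val_castSucc, Fin.val_succ, pow_succ', mul_assoc]

theorem apply_eq_pow_mul_of_mul_eq_hankel [Semiring R] {ι : Type*} [Fintype ι] [DecidableEq ι]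
    {n : ℕ} {a : ℕ → R} {A : Matrix (Fin (n + 1)) ι R} {G : Matrix ι (Fin (n + 1)) R} {d : ι → R}
    (hA : Function.Injective A.mulVec) (hH : A * G = hankel (n + 1) a)
    (hK : A * diagonal d * G = hankel (n + 1) (fun k ↦ a (k + 1))) (i : ι) (j : Fin (n + 1)) :
    G i j = d i ^ (j : ℕ) * G i 0 := by
  refine apply_eq_pow_mul_of_succ_eq_mul (fun j ↦ ?_) j
  have hcol : G.col j.succ = (diagonal d * G).col j.castSucc := by
    refine hA (funext fun l ↦ ?_)
    calc (A * G) l j.succ = (A * diagonal d * G) l j.castSucc := by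
          rw [hH, hK, hankel_shift_apply_castSucc]
      _ = (A * (diagonal d * G)) l j.castSucc := by rw [Matrix.mul_assoc]
  simpa only [col_apply, diagonal_mul] using congrFun hcol i

open scoped NNReal in
theorem exists_quadrature_of_hankel_posDef {N : ℕ} {a : ℕ → ℝ} (ha : (hankel (N + 1) a).PosDef) :
    ∃ (w : Fin (N + 1) → ℝ≥0) (x : Fin (N + 1) → ℝ),
      ∀ k ≤ 2 * N, ∑ i, w i • x i ^ k = a k := by
  obtain ⟨G, d, hG, hH, hK⟩ := exists_simultaneous_diagonalization_of_posDef ha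
    (isHermitian_hankel (N + 1) fun k ↦ a (k + 1))
  have hGpow : ∀ i j, G i j = d i ^ (j : ℕ) * G i 0 :=
    apply_eq_pow_mul_of_mul_eq_hankel (mulVec_injective_of_isUnit hG.star) hH hK
  refine ⟨fun i ↦ ‖G i 0‖₊ ^ 2, d, fun k hk ↦ ?_⟩
  obtain ⟨p, q, rfl⟩ : ∃ p q : Fin (N + 1), (p + q : ℕ) = k :=
    ⟨⟨k / 2, by lia⟩, ⟨k - k / 2, by lia⟩, by simp only; lia⟩
  calc ∑ i, ‖G i 0‖₊ ^ 2 • d i ^ (p + q : ℕ) = ∑ i, G i p * G i q := by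
        refine Finset.sum_congr rfl fun i _ ↦ ?_
        rw [hGpow i p, hGpow i q, NNReal.smul_def, NNReal.coe_pow, coe_nnnorm, Real.norm_eq_abs,
          sq_abs, smul_eq_mul]
        ring
    _ = (Gᴴ * G) p q := rfl
    _ = a (p + q) := by rw [hH, hankel_apply]

end Hankel

section FinitelySupportedMeasure

open scoped NNReal

variable {ι α E : Type*} [MeasurableSpace α] [MeasurableSingletonClass α] [NormedAddCommGroup E]

theorem integrable_sum_smul_dirac (s : Finset ι) (w : ι → ℝ≥0) (x : ι → α) (f : α → E) :
    Integrable f (∑ i ∈ s, w i • Measure.dirac (x i)) :=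
  integrable_finsetSum_measure.mpr fun _ _ ↦ (integrable_dirac (by simp)).smul_measure_nnreal

theorem integral_sum_smul_dirac [NormedSpace ℝ E] [CompleteSpace E] (s : Finset ι) (w : ι → ℝ≥0)
    (x : ι → α) (f : α → E) :
    ∫ y, f y ∂(∑ i ∈ s, w i • Measure.dirac (x i)) = ∑ i ∈ s, w i • f (x i) := by
  rw [integral_finsetSum_measure (integrable_finsetSum_measure.mp
    (integrable_sum_smul_dirac s w x f))]
  simp only [integral_smul_nnreal_measure, integral_dirac]

end FinitelySupportedMeasure

/-- If the `(N+1)×(N+1)` Hankel matrix built from `M₀,…,M_{2N}` is positive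
definite, then there is a nonnegative finite Borel measure `μ` on `ℝ` whose `k`-th moments are
the `M_k` for `k = 0,…,2N`. -/
theorem exists_measure_of_hankel_posDef (N : ℕ) (M : Fin (2 * N + 1) → ℝ)
    (hPD : (Matrix.of fun j k : Fin (N + 1) =>
        M ⟨j.1 + k.1, by have := j.isLt; have := k.isLt; omega⟩).PosDef) :
    ∃ μ : Measure ℝ, IsFiniteMeasure μ ∧
      ∀ k : Fin (2 * N + 1),
        Integrable (fun x : ℝ => x ^ (k : ℕ)) μ ∧ ∫ x : ℝ, x ^ (k : ℕ) ∂μ = M k := by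
  let a : ℕ → ℝ := Function.extend Fin.val M 0
  have ha (k : Fin (2 * N + 1)) : a k = M k := Fin.val_injective.extend_apply M 0 k
  have hankel_posDef : (hankel (N + 1) a).PosDef := by
    convert hPD using 1
    ext j k
    exact ha ⟨j + k, by lia⟩
  obtain ⟨w, x, hwx⟩ := exists_quadrature_of_hankel_posDef hankel_posDef
  refine ⟨∑ i, w i • Measure.dirac (x i), inferInstance, fun k ↦
    ⟨integrable_sum_smul_dirac _ w x _, ?_⟩⟩
  rw [integral_sum_smul_dirac, hwx k (by lia), ha]
end

section
/- Let v ∈ ℝ, s > 0, and a ∈ ℝ. Define β_k = a Δ_k(v, s²) − k s Δ_{k−1}(v, s²) and γ_k = a Δ_k(v, s²) + k s Δ_{k−1}(v, s²) for k = 0, …, 4 (with Δ_{−1} = 0). Then the leading principal minors of the 3×3 Hankel matrices H₂(β) and H₂(γ) coincide and are given by P₁ = a, P₂ = s²(a² − 1), and P₃ = det H₂(β) = det H₂(γ) = 2 a s⁶ (a² − 3). -/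
/-!
A sequence `c_k = a Δ_k + b k Δ_{k-1}` consists of the moments of the linear functional
`p ↦ E[a p(X) + b p'(X)]` with `X ∼ N(v, s²)`. In the basis `1, x - v, (x - v)² - s²` of orthogonal
polynomials of `X`, differentiation lowers the index, so the Gram matrix of this functional is
tridiagonal and does not involve `v`. The change of basis is lower unitriangular, hence preserves
the leading principal minors of the Hankel matrix, and those of a tridiagonal matrix involve `b`
only through `b²`. The sequences `β` and `γ` are the cases `b = -s` and `b = s`.
-/

open MeasureTheory Real

/-- The `k`-th moment `Δ_k(v, s²)` of the normal distribution with mean `v` and variance `s²`. -/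
noncomputable def gaussMoment (v s : ℝ) (k : ℕ) : ℝ :=
  ∫ x : ℝ, x ^ k * ((2 * π * s ^ 2) ^ (-(1 : ℝ) / 2) * Real.exp (-(x - v) ^ 2 / (2 * s ^ 2)))

/-- The `3×3` Hankel matrix `H₂(c)` of a vector `c ∈ ℝ⁵`, with `(j,k)` entry `c_{j+k}`. -/
noncomputable def hankel2 (c : Fin 5 → ℝ) : Matrix (Fin 3) (Fin 3) ℝ :=
  Matrix.of fun j k => c ⟨j.1 + k.1, by have := j.isLt; have := k.isLt; omega⟩

open ProbabilityTheory Matrix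
open scoped NNReal

section Gaussian

variable {μ : ℝ} {v : ℝ≥0}

lemma hasDerivAt_gaussianPDFReal (μ : ℝ) (v : ℝ≥0) (x : ℝ) :
    HasDerivAt (gaussianPDFReal μ v) (-(x - μ) / v * gaussianPDFReal μ v x) x := by
  have hexponent : HasDerivAt (fun y : ℝ ↦ -(y - μ) ^ 2 / (2 * v)) (-(x - μ) / v) x := by
    refine ((((hasDerivAt_id x).sub_const μ).pow 2).neg.div_const (2 * (v : ℝ))).congr_deriv ?_
    rw [← mul_div_mul_left (-(x - μ)) (v : ℝ) two_ne_zero, mul_neg]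
    simp
  refine (hexponent.exp.const_mul _).congr_deriv ?_
  rw [gaussianPDFReal]
  ring

lemma integrable_gaussianReal_iff {E : Type*} [NormedAddCommGroup E] [NormedSpace ℝ E]
    {f : ℝ → E} (hv : v ≠ 0) :
    Integrable f (gaussianReal μ v) ↔ Integrable fun x ↦ gaussianPDFReal μ v x • f x := by
  rw [gaussianReal_of_var_ne_zero μ hv, integrable_withDensity_iff_integrable_smul'
    (measurable_gaussianPDF μ v) (ae_of_all _ fun _ ↦ gaussianPDF_lt_top)]
  simp_rw [toReal_gaussianPDF]

lemma integrable_pow_gaussianReal (k : ℕ) : Integrable (fun x ↦ x ^ k) (gaussianReal μ v) :=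
  integrable_pow_of_mem_interior_integrableExpSet (X := id) (by simp) k

/-- **Stein's lemma**. -/
lemma integral_sub_mul_gaussianReal {f f' : ℝ → ℝ} (hf : ∀ x, HasDerivAt f (f' x) x)
    (hf_int : Integrable f (gaussianReal μ v)) (hf'_int : Integrable f' (gaussianReal μ v))
    (hmul_int : Integrable (fun x ↦ (x - μ) * f x) (gaussianReal μ v)) :
    ∫ x, (x - μ) * f x ∂gaussianReal μ v = v * ∫ x, f' x ∂gaussianReal μ v := by
  rcases eq_or_ne v 0 with rfl | hv
  · simp
  have hv' : (v : ℝ) ≠ 0 := NNReal.coe_ne_zero.mpr hv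
  rw [integrable_gaussianReal_iff hv] at hf_int hf'_int hmul_int
  have hparts : ∫ x, f x * (-(x - μ) / v * gaussianPDFReal μ v x)
      = -∫ x, f' x * gaussianPDFReal μ v x := by
    refine integral_mul_deriv_eq_deriv_mul_of_integrable (fun x _ ↦ hf x)
      (fun x _ ↦ hasDerivAt_gaussianPDFReal μ v x) ?_ ?_ ?_
    · refine (hmul_int.const_mul (-(v : ℝ)⁻¹)).congr (ae_of_all _ fun x ↦ ?_)
      simp only [Pi.mul_apply, smul_eq_mul]
      ring
    · exact hf'_int.congr (ae_of_all _ fun x ↦ mul_comm _ _)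
    · exact hf_int.congr (ae_of_all _ fun x ↦ mul_comm _ _)
  simp_rw [integral_gaussianReal_eq_integral_smul hv, smul_eq_mul]
  calc ∫ x, gaussianPDFReal μ v x * ((x - μ) * f x)
      = ∫ x, -(v : ℝ) * (f x * (-(x - μ) / v * gaussianPDFReal μ v x)) := by
        congr with x
        field_simp
    _ = v * ∫ x, f' x * gaussianPDFReal μ v x := by
        rw [integral_const_mul, hparts, neg_mul_neg]
    _ = v * ∫ x, gaussianPDFReal μ v x * f' x := by simp_rw [mul_comm]

lemma integral_pow_succ_gaussianReal (k : ℕ) :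
    ∫ x, x ^ (k + 1) ∂gaussianReal μ v = μ * ∫ x, x ^ k ∂gaussianReal μ v
      + k * v * ∫ x, x ^ (k - 1) ∂gaussianReal μ v := by
  have hpow (j : ℕ) : Integrable (fun x ↦ x ^ j) (gaussianReal μ v) := integrable_pow_gaussianReal j
  have hsplit : ∀ x : ℝ, (x - μ) * x ^ k = x ^ (k + 1) - μ * x ^ k := fun x ↦ by ring
  have hstein := integral_sub_mul_gaussianReal (fun x ↦ hasDerivAt_pow k x) (hpow k)
    ((hpow (k - 1)).const_mul k)
    (((hpow (k + 1)).sub ((hpow k).const_mul μ)).congr (ae_of_all _ fun x ↦ (hsplit x).symm))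
  simp_rw [hsplit] at hstein
  rw [integral_sub (hpow (k + 1)) ((hpow k).const_mul μ), integral_const_mul,
    integral_const_mul] at hstein
  linear_combination hstein

end Gaussian

section Moments

variable {s : ℝ}

lemma gaussMoment_eq_integral_gaussianReal (v : ℝ) (hs : s ≠ 0) (k : ℕ) :
    gaussMoment v s k = ∫ x, x ^ k ∂gaussianReal v (s ^ 2).toNNReal := by
  have hvar : (s ^ 2).toNNReal ≠ 0 := by simpa using hs
  rw [integral_gaussianReal_eq_integral_smul hvar, gaussMoment]
  congr with x
  rw [gaussianPDFReal, Real.coe_toNNReal _ (sq_nonneg s), neg_div 2 (1 : ℝ),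
    Real.rpow_neg (by positivity), ← Real.sqrt_eq_rpow, smul_eq_mul, mul_comm]

lemma gaussMoment_zero (v : ℝ) (hs : s ≠ 0) : gaussMoment v s 0 = 1 := by
  simp [gaussMoment_eq_integral_gaussianReal v hs]

lemma gaussMoment_succ (v : ℝ) (hs : s ≠ 0) (k : ℕ) :
    gaussMoment v s (k + 1) = v * gaussMoment v s k + k * s ^ 2 * gaussMoment v s (k - 1) := by
  simp_rw [gaussMoment_eq_integral_gaussianReal v hs, integral_pow_succ_gaussianReal,
    Real.coe_toNNReal _ (sq_nonneg s)]

lemma gaussMoment_one (v : ℝ) (hs : s ≠ 0) : gaussMoment v s 1 = v := by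
  simp [gaussMoment_succ v hs 0, gaussMoment_zero v hs]

lemma gaussMoment_two (v : ℝ) (hs : s ≠ 0) : gaussMoment v s 2 = v ^ 2 + s ^ 2 := by
  rw [gaussMoment_succ v hs 1, gaussMoment_one v hs, gaussMoment_zero v hs]
  push_cast
  ring

lemma gaussMoment_three (v : ℝ) (hs : s ≠ 0) :
    gaussMoment v s 3 = v ^ 3 + 3 * v * s ^ 2 := by
  rw [gaussMoment_succ v hs 2, gaussMoment_two v hs, gaussMoment_one v hs]
  push_cast
  ring

lemma gaussMoment_four (v : ℝ) (hs : s ≠ 0) :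
    gaussMoment v s 4 = v ^ 4 + 6 * v ^ 2 * s ^ 2 + 3 * s ^ 4 := by
  rw [gaussMoment_succ v hs 3, gaussMoment_three v hs, gaussMoment_two v hs]
  push_cast
  ring

end Moments

section LeadingMinor

variable {R : Type*} [CommRing R] {n k : ℕ}

/-- The leading principal minor of order `k` of an `n × n` matrix. -/
def leadingMinor (M : Matrix (Fin n) (Fin n) R) (h : k ≤ n) : R :=
  (M.submatrix (Fin.castLE h) (Fin.castLE h)).det

lemma leadingMinor_one (M : Matrix (Fin (n + 1)) (Fin (n + 1)) R) (h : 1 ≤ n + 1) :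
    leadingMinor M h = M 0 0 := by
  rw [leadingMinor, det_fin_one]
  rfl

lemma leadingMinor_two (M : Matrix (Fin (n + 2)) (Fin (n + 2)) R) (h : 2 ≤ n + 2) :
    leadingMinor M h = M 0 0 * M 1 1 - M 0 1 * M 1 0 := by
  rw [leadingMinor, det_fin_two]
  rfl

lemma leadingMinor_self (M : Matrix (Fin n) (Fin n) R) : leadingMinor M le_rfl = M.det :=
  rfl

lemma submatrix_castLE_mul_of_isLowerTriangular {p q : Type*} {L : Matrix (Fin n) (Fin n) R}
    (hL : L.IsLowerTriangular) (M : Matrix (Fin n) p R) (h : k ≤ n) (f : q → p) :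
    (L * M).submatrix (Fin.castLE h) f =
      L.submatrix (Fin.castLE h) (Fin.castLE h) * M.submatrix (Fin.castLE h) f := by
  ext i j
  refine (Fintype.sum_of_injective (Fin.castLE h) (Fin.castLE_injective h) _ _ ?_ fun _ ↦ rfl).symm
  intro l hl
  have hlt : Fin.castLE h i < l := by
    by_contra! hle
    exact hl ⟨⟨l, (Fin.le_def.mp hle).trans_lt i.isLt⟩, rfl⟩
  have hzero : L (Fin.castLE h i) l = 0 := hL hlt
  simp [hzero]

lemma leadingMinor_mul_mul_transpose {L : Matrix (Fin n) (Fin n) R} (hL : L.IsLowerTriangular)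
    (hdiag : ∀ i, L i i = 1) (M : Matrix (Fin n) (Fin n) R) (h : k ≤ n) :
    leadingMinor (L * M * Lᵀ) h = leadingMinor M h := by
  set e := Fin.castLE h
  have hdet : (L.submatrix e e).det = 1 := by
    have hLe : (L.submatrix e e).IsLowerTriangular := fun _ _ hij ↦ hL hij
    simp [det_of_isLowerTriangular _ hLe, hdiag]
  have hright : (M * Lᵀ).submatrix e e = M.submatrix e e * (L.submatrix e e)ᵀ := by
    simpa [transpose_mul] using
      congrArg transpose (submatrix_castLE_mul_of_isLowerTriangular hL Mᵀ h e)
  rw [leadingMinor, Matrix.mul_assoc, submatrix_castLE_mul_of_isLowerTriangular hL, hright,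
    det_mul, det_mul, det_transpose, hdet, one_mul, mul_one, leadingMinor]

end LeadingMinor

section Hankel

/-- The coefficients of `1, x, x²` in the orthogonal polynomials `1, x - v, (x - v)² - s²` of the
normal distribution with mean `v` and variance `s²`; row `i` expands `xⁱ`. -/
def monomialToHermite (v s : ℝ) : Matrix (Fin 3) (Fin 3) ℝ :=
  !![1, 0, 0; v, 1, 0; v ^ 2 + s ^ 2, 2 * v, 1]

/-- The Gram matrix of the functional `p ↦ E[a p(X) + b p'(X)]`, `X ∼ N(v, s²)`, in the orthogonal
polynomials `1, x - v, (x - v)² - s²`. -/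
def hermiteGram (s a b : ℝ) : Matrix (Fin 3) (Fin 3) ℝ :=
  !![a, b, 0; b, a * s ^ 2, 2 * b * s ^ 2; 0, 2 * b * s ^ 2, 2 * a * s ^ 4]

lemma isLowerTriangular_monomialToHermite (v s : ℝ) :
    (monomialToHermite v s).IsLowerTriangular := by
  intro i j hij
  fin_cases i <;> fin_cases j <;> first | rfl | exact absurd hij (by decide)

lemma monomialToHermite_diag (v s : ℝ) (i : Fin 3) : monomialToHermite v s i i = 1 := by
  fin_cases i <;> rfl

lemma hankel2_eq_of (c : Fin 5 → ℝ) :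
    hankel2 c = !![c 0, c 1, c 2; c 1, c 2, c 3; c 2, c 3, c 4] := by
  ext i j
  fin_cases i <;> fin_cases j <;> rfl

variable {v s a b : ℝ} {c : Fin 5 → ℝ}

lemma hankel2_eq_mul_hermiteGram_mul (hs : s ≠ 0)
    (hc : ∀ k : Fin 5,
      c k = a * gaussMoment v s k.1 + (k.1 : ℝ) * b * gaussMoment v s (k.1 - 1)) :
    hankel2 c = monomialToHermite v s * hermiteGram s a b * (monomialToHermite v s)ᵀ := by
  have hc0 : c 0 = a := by simp [hc, gaussMoment_zero v hs]
  have hc1 : c 1 = a * v + b := by simp [hc, gaussMoment_zero v hs, gaussMoment_one v hs]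
  have hc2 : c 2 = a * (v ^ 2 + s ^ 2) + 2 * b * v := by
    simp [hc, gaussMoment_one v hs, gaussMoment_two v hs]
  have hc3 : c 3 = a * (v ^ 3 + 3 * v * s ^ 2) + 3 * b * (v ^ 2 + s ^ 2) := by
    simp [hc, gaussMoment_two v hs, gaussMoment_three v hs]
  have hc4 : c 4 = a * (v ^ 4 + 6 * v ^ 2 * s ^ 2 + 3 * s ^ 4)
      + 4 * b * (v ^ 3 + 3 * v * s ^ 2) := by
    simp [hc, gaussMoment_three v hs, gaussMoment_four v hs]
  rw [hankel2_eq_of, hc0, hc1, hc2, hc3, hc4, monomialToHermite, hermiteGram]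
  ext i j
  fin_cases i <;> fin_cases j <;> simp [Matrix.mul_apply, Fin.sum_univ_three] <;> ring

lemma leadingMinor_hankel2 (hs : s ≠ 0)
    (hc : ∀ k : Fin 5,
      c k = a * gaussMoment v s k.1 + (k.1 : ℝ) * b * gaussMoment v s (k.1 - 1))
    {k : ℕ} (h : k ≤ 3) : leadingMinor (hankel2 c) h = leadingMinor (hermiteGram s a b) h := by
  rw [hankel2_eq_mul_hermiteGram_mul hs hc, leadingMinor_mul_mul_transpose
    (isLowerTriangular_monomialToHermite v s) (monomialToHermite_diag v s)]

lemma det_hermiteGram (s a b : ℝ) :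
    (hermiteGram s a b).det = 2 * a * s ^ 4 * (a ^ 2 * s ^ 2 - 3 * b ^ 2) := by
  simp only [hermiteGram, det_fin_three, of_apply, cons_val]
  ring

end Hankel

theorem hankel_beta_gamma_minors_general {v s a b : ℝ} (hs : s ≠ 0) {c : Fin 5 → ℝ}
    (hc : ∀ k : Fin 5,
      c k = a * gaussMoment v s k.1 + (k.1 : ℝ) * b * gaussMoment v s (k.1 - 1)) :
    hankel2 c 0 0 = a ∧
    hankel2 c 0 0 * hankel2 c 1 1 - hankel2 c 0 1 * hankel2 c 1 0 = a ^ 2 * s ^ 2 - b ^ 2 ∧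
    (hankel2 c).det = 2 * a * s ^ 4 * (a ^ 2 * s ^ 2 - 3 * b ^ 2) := by
  refine ⟨?_, ?_, ?_⟩
  · rw [← leadingMinor_one (hankel2 c) (by norm_num), leadingMinor_hankel2 hs hc, leadingMinor_one]
    rfl
  · rw [← leadingMinor_two (hankel2 c) (by norm_num), leadingMinor_hankel2 hs hc, leadingMinor_two]
    simp only [hermiteGram, of_apply, cons_val]
    ring
  · rw [← leadingMinor_self, leadingMinor_hankel2 hs hc, leadingMinor_self, det_hermiteGram]

/-- with `β_k = aΔ_k − k s Δ_{k−1}` and `γ_k = aΔ_k + k s Δ_{k−1}` (and `Δ_{−1}=0`),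
the leading principal minors of `H₂(β)` and `H₂(γ)` coincide and are `P₁ = a`,
`P₂ = s²(a²−1)` and `P₃ = 2as⁶(a²−3)`.  (The term `k s Δ_{k−1}` vanishes for `k = 0`, so the
ℕ-subtraction `k − 1` is harmless there.) -/
theorem hankel_beta_gamma_minors (v s a : ℝ) (hs : 0 < s)
    (β γ : Fin 5 → ℝ)
    (hβ : ∀ k : Fin 5,
      β k = a * gaussMoment v s k.1 - (k.1 : ℝ) * s * gaussMoment v s (k.1 - 1))
    (hγ : ∀ k : Fin 5,
      γ k = a * gaussMoment v s k.1 + (k.1 : ℝ) * s * gaussMoment v s (k.1 - 1)) :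
    (hankel2 β 0 0 = a ∧ hankel2 γ 0 0 = a) ∧
    (hankel2 β 0 0 * hankel2 β 1 1 - hankel2 β 0 1 * hankel2 β 1 0 = s ^ 2 * (a ^ 2 - 1) ∧
      hankel2 γ 0 0 * hankel2 γ 1 1 - hankel2 γ 0 1 * hankel2 γ 1 0 = s ^ 2 * (a ^ 2 - 1)) ∧
    ((hankel2 β).det = 2 * a * s ^ 6 * (a ^ 2 - 3) ∧
      (hankel2 γ).det = 2 * a * s ^ 6 * (a ^ 2 - 3)) := by
  obtain ⟨hβ₁, hβ₂, hβ₃⟩ :=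
    hankel_beta_gamma_minors_general (b := -s) hs.ne' fun k ↦ (hβ k).trans (by ring)
  obtain ⟨hγ₁, hγ₂, hγ₃⟩ := hankel_beta_gamma_minors_general hs.ne' hγ
  exact ⟨⟨hβ₁, hγ₁⟩, ⟨hβ₂.trans (by ring), hγ₂.trans (by ring)⟩,
    hβ₃.trans (by ring), hγ₃.trans (by ring)⟩
end

section
/- Let M = (M₀, …, M₄) ∈ ℝ⁵ with H₂(M) positive definite, and let S = (0, 0, 0, S₃, S₄) with S₃ ≠ 0. Set a₀ = −M₀S₃², a₁ = 2S₃(M₁M₂ − M₀M₃) + S₄(M₀M₂ − M₁²), a₂ = det H₂(M). Then a₀ < 0 and a₂ > 0, the quadratic P(μ) = a₀μ² + a₁μ + a₂ has a unique positive root μ₀, and the Hankel matrix H₂(M + μS) is positive definite for every μ ∈ [0, μ₀) and positive semidefinite at μ = μ₀. -/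
/-!
Since `S` vanishes in its first three entries, `H₂(M + μS)` has the same leading `2 × 2` block as
`H₂(M)`, which is positive definite. By the Schur complement, a Hermitian matrix bordering a
positive definite block by one row and column is positive (semi)definite exactly when its
determinant is positive (nonnegative). Here the determinant is `P(μ)`, which factors as
`(μ₀ - μ) * (a₂ / μ₀ - a₀ * μ)`, and the second factor is positive for `μ ≥ 0`.
-/

section Quadratic

lemma exists_pos_quadratic_eq_zero {a b c : ℝ} (ha : a < 0) (hc : 0 < c) :
    ∃ r, 0 < r ∧ a * r ^ 2 + b * r + c = 0 := by
  have hdiscrim : 0 ≤ discrim a b c :=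
    sub_nonneg.mpr (by nlinarith only [sq_nonneg b, mul_neg_of_neg_of_pos ha hc])
  obtain ⟨r, hr⟩ :=
    exists_quadratic_eq_zero ha.ne ⟨√(discrim a b c), (Real.mul_self_sqrt hdiscrim).symm⟩
  have hr0 : r ≠ 0 := by
    rintro rfl
    simp [hc.ne'] at hr
  rcases hr0.lt_or_gt with hneg | hpos
  · -- The product of the two roots is `c / a < 0`, so the other root is positive.
    refine ⟨c / (a * r), div_pos hc (mul_pos_of_neg_of_neg ha hneg), ?_⟩
    have ha0 := ha.ne
    field_simp
    linear_combination c * hr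
  · exact ⟨r, hpos, by linear_combination hr⟩

variable {K : Type*} [Field K]

lemma quadratic_eq_mul_of_root {a b c r : K} (hr : r ≠ 0)
    (hroot : a * r ^ 2 + b * r + c = 0) (x : K) :
    a * x ^ 2 + b * x + c = (r - x) * (c / r - a * x) := by
  field_simp
  linear_combination x * hroot

variable [LinearOrder K] [IsStrictOrderedRing K] {a b c r x : K}

lemma div_sub_mul_pos (ha : a ≤ 0) (hc : 0 < c) (hr : 0 < r) (hx : 0 ≤ x) :
    0 < c / r - a * x := by
  linarith only [div_pos hc hr, mul_nonpos_of_nonpos_of_nonneg ha hx]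

lemma quadratic_pos_iff_lt_root (ha : a ≤ 0) (hc : 0 < c) (hr : 0 < r)
    (hroot : a * r ^ 2 + b * r + c = 0) (hx : 0 ≤ x) :
    0 < a * x ^ 2 + b * x + c ↔ x < r := by
  rw [quadratic_eq_mul_of_root hr.ne' hroot,
    mul_pos_iff_of_pos_right (div_sub_mul_pos ha hc hr hx), sub_pos]

lemma quadratic_eq_zero_iff_eq_root (ha : a ≤ 0) (hc : 0 < c) (hr : 0 < r)
    (hroot : a * r ^ 2 + b * r + c = 0) (hx : 0 ≤ x) :
    a * x ^ 2 + b * x + c = 0 ↔ x = r := by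
  rw [quadratic_eq_mul_of_root hr.ne' hroot,
    mul_eq_zero_iff_right (div_sub_mul_pos ha hc hr hx).ne', sub_eq_zero, eq_comm]

end Quadratic

section BorderedMatrix

open Matrix
open scoped ComplexOrder

lemma posSemidef_iff_det_nonneg_of_unique {R n : Type*} [CommRing R] [PartialOrder R] [StarRing R]
    [StarOrderedRing R] [Unique n] [Fintype n] [DecidableEq n] (A : Matrix n n R) :
    A.PosSemidef ↔ 0 ≤ A.det := by
  have hA : A = diagonal fun _ => A default default := by
    ext i j
    simp [Unique.eq_default]
  rw [hA, posSemidef_diagonal_iff, det_unique]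
  simp

variable {𝕜 : Type*} [RCLike 𝕜]

lemma posSemidef_fromBlocks_iff_det_nonneg {m n : Type*} [Fintype m] [DecidableEq m]
    [Unique n] [Fintype n] [DecidableEq n] {A : Matrix m m 𝕜} (hA : A.PosDef)
    (B : Matrix m n 𝕜) (D : Matrix n n 𝕜) :
    (fromBlocks A B Bᴴ D).PosSemidef ↔ 0 ≤ (fromBlocks A B Bᴴ D).det := by
  let : Invertible A := hA.isUnit.invertible
  rw [PosDef.fromBlocks₁₁ B D hA, posSemidef_iff_det_nonneg_of_unique, det_fromBlocks₁₁,
    invOf_eq_nonsing_inv, ← mul_le_mul_iff_right₀ hA.det_pos, mul_zero]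

variable {n : ℕ} {A : Matrix (Fin (n + 1)) (Fin (n + 1)) 𝕜}

lemma posSemidef_iff_det_nonneg_of_posDef_castSucc (hA : A.IsHermitian)
    (hlead : (A.submatrix Fin.castSucc Fin.castSucc).PosDef) :
    A.PosSemidef ↔ 0 ≤ A.det := by
  let e : Fin n ⊕ Fin 1 ≃ Fin (n + 1) := finSumFinEquiv
  have hblocks : A.submatrix e e = fromBlocks (A.submatrix Fin.castSucc Fin.castSucc)
      (A.submatrix e e).toBlocks₁₂ (A.submatrix e e).toBlocks₁₂ᴴ (A.submatrix e e).toBlocks₂₂ := by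
    have hherm := hA.submatrix e
    rw [← fromBlocks_toBlocks (A.submatrix e e), isHermitian_fromBlocks_iff] at hherm
    rw [hherm.2.1]
    exact (fromBlocks_toBlocks _).symm
  rw [← posSemidef_submatrix_equiv e, ← det_submatrix_equiv_self e A, hblocks]
  exact posSemidef_fromBlocks_iff_det_nonneg hlead _ _

lemma posDef_iff_det_pos_of_posDef_castSucc (hA : A.IsHermitian)
    (hlead : (A.submatrix Fin.castSucc Fin.castSucc).PosDef) :
    A.PosDef ↔ 0 < A.det := by
  refine ⟨PosDef.det_pos, fun hdet => ?_⟩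
  have hpsd := (posSemidef_iff_det_nonneg_of_posDef_castSucc hA hlead).mpr hdet.le
  exact hpsd.posDef_iff_det_ne_zero.mpr hdet.ne'

end BorderedMatrix

section Hankel

open Matrix

lemma isHermitian_hankel2 (c : Fin 5 → ℝ) : (hankel2 c).IsHermitian := by
  ext i j
  simp [hankel2, Nat.add_comm]

lemma det_hankel2 (c : Fin 5 → ℝ) :
    (hankel2 c).det =
      c 0 * c 2 * c 4 + 2 * c 1 * c 2 * c 3 - c 2 ^ 3 - c 0 * c 3 ^ 2 - c 1 ^ 2 * c 4 := by
  simp only [det_fin_three, hankel2, of_apply, Fin.reduceFinMk, Fin.val_zero, Fin.val_one,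
    Fin.val_two, Nat.reduceAdd]
  ring

lemma det_hankel2_add_mul {S : Fin 5 → ℝ} (M : Fin 5 → ℝ) (hS0 : S 0 = 0) (hS1 : S 1 = 0)
    (hS2 : S 2 = 0) (μ : ℝ) :
    (hankel2 fun k => M k + μ * S k).det =
      (-(M 0) * (S 3) ^ 2) * μ ^ 2
        + (2 * S 3 * (M 1 * M 2 - M 0 * M 3) + S 4 * (M 0 * M 2 - (M 1) ^ 2)) * μ
        + (hankel2 M).det := by
  simp only [det_hankel2, hS0, hS1, hS2]
  ring

lemma submatrix_castSucc_hankel2_congr {c d : Fin 5 → ℝ}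
    (h0 : c 0 = d 0) (h1 : c 1 = d 1) (h2 : c 2 = d 2) :
    (hankel2 c).submatrix (Fin.castSucc : Fin 2 → Fin 3) Fin.castSucc =
      (hankel2 d).submatrix Fin.castSucc Fin.castSucc := by
  ext i j
  fin_cases i <;> fin_cases j <;> simp [hankel2, h0, h1, h2]

end Hankel

/-- if `H₂(M)` is positive definite and `S = (0,0,0,S₃,S₄)` with `S₃ ≠ 0`, then
`a₀ < 0`, `a₂ > 0`, the quadratic `P(μ) = a₀μ² + a₁μ + a₂` has a unique positive root `μ₀`,
`H₂(M + μS)` is positive definite for `μ ∈ [0, μ₀)`, and positive semidefinite at `μ = μ₀`. -/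
theorem hankel_source_realizable_interval (M S : Fin 5 → ℝ)
    (hS0 : S 0 = 0) (hS1 : S 1 = 0) (hS2 : S 2 = 0) (hS3 : S 3 ≠ 0)
    (hM : (hankel2 M).PosDef) :
    (-(M 0) * (S 3) ^ 2 < 0) ∧ (0 < (hankel2 M).det) ∧
    ∃ μ₀ : ℝ, 0 < μ₀ ∧
      (-(M 0) * (S 3) ^ 2) * μ₀ ^ 2
        + (2 * S 3 * (M 1 * M 2 - M 0 * M 3) + S 4 * (M 0 * M 2 - (M 1) ^ 2)) * μ₀
        + (hankel2 M).det = 0 ∧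
      (∀ μ : ℝ, 0 < μ →
        (-(M 0) * (S 3) ^ 2) * μ ^ 2
          + (2 * S 3 * (M 1 * M 2 - M 0 * M 3) + S 4 * (M 0 * M 2 - (M 1) ^ 2)) * μ
          + (hankel2 M).det = 0 → μ = μ₀) ∧
      (∀ μ : ℝ, 0 ≤ μ → μ < μ₀ → (hankel2 (fun k => M k + μ * S k)).PosDef) ∧
      (hankel2 (fun k => M k + μ₀ * S k)).PosSemidef := by
  have hM0 : 0 < M 0 := hM.diag_pos (i := 0)
  have ha₀ : -(M 0) * (S 3) ^ 2 < 0 := mul_neg_of_neg_of_pos (neg_neg_of_pos hM0) (by positivity)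
  have ha₂ := hM.det_pos
  obtain ⟨μ₀, hμ₀, hroot⟩ := exists_pos_quadratic_eq_zero ha₀ ha₂
  have hlead (μ : ℝ) : ((hankel2 fun k => M k + μ * S k).submatrix
      (Fin.castSucc : Fin 2 → Fin 3) Fin.castSucc).PosDef := by
    rw [submatrix_castSucc_hankel2_congr (d := M) (by simp [hS0]) (by simp [hS1]) (by simp [hS2])]
    exact hM.submatrix (Fin.castSucc_injective 2)
  refine ⟨ha₀, ha₂, μ₀, hμ₀, hroot, fun μ hμ => ?_, fun μ hμ hlt => ?_, ?_⟩
  · exact (quadratic_eq_zero_iff_eq_root ha₀.le ha₂ hμ₀ hroot hμ.le).mp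
  · rw [posDef_iff_det_pos_of_posDef_castSucc (isHermitian_hankel2 _) (hlead μ),
      det_hankel2_add_mul M hS0 hS1 hS2]
    exact (quadratic_pos_iff_lt_root ha₀.le ha₂ hμ₀ hroot hμ).mpr hlt
  · rw [posSemidef_iff_det_nonneg_of_posDef_castSucc (isHermitian_hankel2 _) (hlead μ₀),
      det_hankel2_add_mul M hS0 hS1 hS2]
    exact hroot.ge
end

section
/- Let Δt, Δx > 0, λ = Δt/Δx, and τ > 0. Let M_L⁻, M_L⁺, M_R⁻, M_R⁺ ∈ ℝ⁵ each be of three-point HyQMOM form with ρ₁, ρ₂, ρ₃ > 0 and v₁ < v₂ < v₃ (each state with its own parameters), with interface speeds δ_L±, δ_R± and HLL fluxes F̂_L, F̂_R as in the HLL construction, and cell average M̄ = ½(M_L⁺ + M_R⁻). Let S denote the BGK source, and suppose μ > 0 is such that H₂(M_L⁺ + μ S(M_L⁺)) and H₂(M_R⁻ + μ S(M_R⁻)) are positive semidefinite. Define M_new = M̄ − λ(F̂_R − F̂_L) + (Δt/2)(S(M_L⁺) + S(M_R⁻)). If λ(δ_L⁺ − δ_L⁻) + Δt/μ < ½ and λ(δ_R⁺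 − δ_R⁻) + Δt/μ < ½, then H₂(M_new) is positive definite. -/
/-- Parameters of a three-point HyQMOM state: positive weights and ordered abscissas. -/
structure HyqParams where
  r1 : ℝ
  r2 : ℝ
  r3 : ℝ
  v1 : ℝ
  v2 : ℝ
  v3 : ℝ
  hr1 : 0 < r1
  hr2 : 0 < r2
  hr3 : 0 < r3
  h12 : v1 < v2
  h23 : v2 < v3

/-- Moment vector `M_k = ρ₁v₁^k + ρ₂v₂^k + ρ₃v₃^k`, `k = 0,…,4`. -/
noncomputable def HyqParams.M (W : HyqParams) : Fin 5 → ℝ :=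
  fun k => W.r1 * W.v1 ^ k.1 + W.r2 * W.v2 ^ k.1 + W.r3 * W.v3 ^ k.1

/-- Flux vector `F(M) = (M₁,…,M₄,M₅)` with `M₅ = ρ₁v₁⁵ + ρ₂v₂⁵ + ρ₃v₃⁵`. -/
noncomputable def HyqParams.F (W : HyqParams) : Fin 5 → ℝ :=
  fun k => W.r1 * W.v1 ^ (k.1 + 1) + W.r2 * W.v2 ^ (k.1 + 1) + W.r3 * W.v3 ^ (k.1 + 1)

/-- Wave speed `δ⁺(M) = max{v₁, v₂, v₃, 0}`. -/
noncomputable def HyqParams.dp (W : HyqParams) : ℝ :=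
  max (max (max W.v1 W.v2) W.v3) 0

/-- Wave speed `δ⁻(M) = min{v₁, v₂, v₃, 0}`. -/
noncomputable def HyqParams.dm (W : HyqParams) : ℝ :=
  min (min (min W.v1 W.v2) W.v3) 0

/-- HLL numerical flux
`F̂(M⁻,M⁺) = (δ̂⁺F(M⁻) − δ̂⁻F(M⁺) + δ̂⁺δ̂⁻(M⁺ − M⁻))/(δ̂⁺ − δ̂⁻)`. -/
noncomputable def hllFlux (dp dm : ℝ) (Mm Mp Fm Fp : Fin 5 → ℝ) : Fin 5 → ℝ :=
  fun k => (dp * Fm k - dm * Fp k + dp * dm * (Mp k - Mm k)) / (dp - dm)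

/-- BGK source `S(M) = (0,0,0,(ρΔ₃(U,θ) − M₃)/τ, (ρΔ₄(U,θ) − M₄)/τ)` with `ρ = M₀`,
`U = M₁/M₀`, `θ = M₂/M₀ − U²`. -/
noncomputable def bgkSource (τ : ℝ) (M : Fin 5 → ℝ) : Fin 5 → ℝ :=
  ![0, 0, 0,
    (M 0 * ((M 1 / M 0) ^ 3 + 3 * (M 1 / M 0) * (M 2 / M 0 - (M 1 / M 0) ^ 2)) - M 3) / τ,
    (M 0 * ((M 1 / M 0) ^ 4 + 6 * (M 1 / M 0) ^ 2 * (M 2 / M 0 - (M 1 / M 0) ^ 2)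
        + 3 * (M 2 / M 0 - (M 1 / M 0) ^ 2) ^ 2) - M 4) / τ]

/-!
Positive definiteness of `H₂` is tracked in the Loewner order, where the flux of a state whose
nodes lie in `[a, b]` satisfies `a H₂(M) ≤ H₂(F) ≤ b H₂(M)`. The HLL flux equals both
`F⁻ + a (M⋆ - M⁻)` and `F⁺ + b (M⋆ - M⁺)` for an intermediate state `M⋆` with `0 ≤ H₂(M⋆)`, so
`-(b - a) H₂(M⁺) ≤ H₂(F̂) ≤ (b - a) H₂(M⁻)`. The update splits into one half per interface, each
involving a single interior state `M`: the flux costs at most `λ (b - a) H₂(M)` and the source at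
most `(Δt / 2μ) H₂(M)`, which the CFL condition keeps below the available `½ H₂(M)`.
-/

open Matrix
open scoped MatrixOrder ComplexOrder

section Hankel

variable (c d : Fin 5 → ℝ)

lemma hankel2_add : hankel2 (c + d) = hankel2 c + hankel2 d := rfl

lemma hankel2_sub : hankel2 (c - d) = hankel2 c - hankel2 d := rfl

lemma hankel2_smul (t : ℝ) : hankel2 (t • c) = t • hankel2 c := rfl

end Hankel

section Quadrature

variable {ι : Type*} [Fintype ι] {w v : ι → ℝ} {a b : ℝ}

/-- The moments of orders `0, …, 4` of the discrete measure with weight `w i` at the node `v i`. -/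
def quadratureMoments (w v : ι → ℝ) : Fin 5 → ℝ :=
  fun k => ∑ i, w i * v i ^ (k : ℕ)

lemma hankel2_quadratureMoments [DecidableEq ι] (w v : ι → ℝ) :
    hankel2 (quadratureMoments w v) =
      (rectVandermonde v 1 3)ᴴ * diagonal w * rectVandermonde v 1 3 := by
  ext j k
  rw [mul_apply]
  simp only [hankel2, quadratureMoments, of_apply, mul_diagonal, conjTranspose_apply,
    rectVandermonde_apply, Pi.one_apply, one_pow, mul_one, star_trivial, pow_add]
  exact Finset.sum_congr rfl fun i _ => by ring

lemma quadratureMoments_sub (w w' v : ι → ℝ) :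
    quadratureMoments (w - w') v = quadratureMoments w v - quadratureMoments w' v := by
  ext k
  simp only [quadratureMoments, Pi.sub_apply, sub_mul, Finset.sum_sub_distrib]

lemma quadratureMoments_smul (t : ℝ) (w v : ι → ℝ) :
    quadratureMoments (t • w) v = t • quadratureMoments w v := by
  ext k
  simp only [quadratureMoments, Pi.smul_apply, smul_eq_mul, mul_assoc, Finset.mul_sum]

lemma hankel2_quadratureMoments_mono {w' : ι → ℝ} (hw : w ≤ w') :
    hankel2 (quadratureMoments w v) ≤ hankel2 (quadratureMoments w' v) := by
  classical
  rw [← sub_nonneg, ← hankel2_sub, ← quadratureMoments_sub, hankel2_quadratureMoments]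
  exact ((PosSemidef.diagonal (sub_nonneg.2 hw)).conjTranspose_mul_mul_same _).nonneg

lemma rectVandermonde_mulVec_injective {R α : Type*} [CommRing R] [IsDomain R] {n : ℕ}
    {v : α → R} {e : Fin n → α} (he : Function.Injective (v ∘ e)) :
    Function.Injective (rectVandermonde v 1 n).mulVec := by
  refine (injective_iff_map_eq_zero (rectVandermonde v 1 n).mulVecLin).2 fun x hx => ?_
  refine eq_zero_of_forall_index_sum_pow_mul_eq_zero he fun i => ?_
  simpa [mulVec, dotProduct, rectVandermonde_apply] using congrFun hx (e i)

lemma hankel2_quadratureMoments_posDef {e : Fin 3 → ι} (he : Function.Injective (v ∘ e))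
    (hw : ∀ i, 0 < w i) : (hankel2 (quadratureMoments w v)).PosDef := by
  classical
  rw [hankel2_quadratureMoments]
  exact (PosDef.diagonal hw).conjTranspose_mul_mul_same (rectVandermonde_mulVec_injective he)

/-- The moment vector `M` with flux `F` has wave speeds in `[a, b]`, in the sense that
`a H₂(M) ≤ H₂(F) ≤ b H₂(M)` in the Loewner order. This retains what is needed from the nodes of a
quadrature state lying in `[a, b]`, without reference to the nodes. -/
structure WaveSpeedsIn (a b : ℝ) (M F : Fin 5 → ℝ) : Prop where
  lower : a • hankel2 M ≤ hankel2 F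
  upper : hankel2 F ≤ b • hankel2 M

lemma waveSpeedsIn_quadratureMoments (hw : 0 ≤ w) (hv : ∀ i, v i ∈ Set.Icc a b) :
    WaveSpeedsIn a b (quadratureMoments w v) (quadratureMoments (w * v) v) where
  lower := by
    rw [← hankel2_smul, ← quadratureMoments_smul]
    refine hankel2_quadratureMoments_mono fun i => ?_
    exact (mul_le_mul_of_nonneg_right (hv i).1 (hw i)).trans_eq (mul_comm _ _)
  upper := by
    rw [← hankel2_smul, ← quadratureMoments_smul]
    refine hankel2_quadratureMoments_mono fun i => ?_
    exact (mul_comm _ _).trans_le (mul_le_mul_of_nonneg_right (hv i).2 (hw i))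

end Quadrature

section HLL

variable {a b : ℝ} {Mm Mp Fm Fp : Fin 5 → ℝ}

/-- The data of an HLL interface: states `Mm`, `Mp` with fluxes `Fm`, `Fp` on the minus and plus
sides, and extreme speeds `a < b` enclosing `0` and the wave speeds of both states. The strict
inequality keeps the denominator `b - a` of `hllFlux b a` away from `0`. -/
structure IsHLLInterface (a b : ℝ) (Mm Mp Fm Fp : Fin 5 → ℝ) : Prop where
  lt : a < b
  nonpos : a ≤ 0
  nonneg : 0 ≤ b
  minus : WaveSpeedsIn a b Mm Fm
  plus : WaveSpeedsIn a b Mp Fp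

/-- The intermediate state `M⋆` of the HLL approximate Riemann solver with extreme speeds `a < b`,
that is, the average of the Riemann fan. -/
noncomputable def hllState (a b : ℝ) (Mm Mp Fm Fp : Fin 5 → ℝ) : Fin 5 → ℝ :=
  (b - a)⁻¹ • ((b • Mp - Fp) + (Fm - a • Mm))

lemma hllFlux_eq_minus (hab : a < b) :
    hllFlux b a Mm Mp Fm Fp = Fm + a • (hllState a b Mm Mp Fm Fp - Mm) := by
  have hba : b - a ≠ 0 := (sub_pos.2 hab).ne'
  ext k
  simp only [hllFlux, hllState, Pi.add_apply, Pi.sub_apply, Pi.smul_apply, smul_eq_mul]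
  field_simp
  ring

lemma hllFlux_eq_plus (hab : a < b) :
    hllFlux b a Mm Mp Fm Fp = Fp + b • (hllState a b Mm Mp Fm Fp - Mp) := by
  have hba : b - a ≠ 0 := (sub_pos.2 hab).ne'
  ext k
  simp only [hllFlux, hllState, Pi.add_apply, Pi.sub_apply, Pi.smul_apply, smul_eq_mul]
  field_simp
  ring

lemma hankel2_hllState_nonneg (hab : a < b) (hm : a • hankel2 Mm ≤ hankel2 Fm)
    (hp : hankel2 Fp ≤ b • hankel2 Mp) : 0 ≤ hankel2 (hllState a b Mm Mp Fm Fp) := by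
  rw [hllState, hankel2_smul, hankel2_add, hankel2_sub, hankel2_sub, hankel2_smul, hankel2_smul]
  exact smul_nonneg (inv_nonneg.2 (sub_nonneg.2 hab.le))
    (add_nonneg (sub_nonneg.2 hp) (sub_nonneg.2 hm))

namespace IsHLLInterface

lemma hankel2_hllFlux_le (h : IsHLLInterface a b Mm Mp Fm Fp) :
    hankel2 (hllFlux b a Mm Mp Fm Fp) ≤ (b - a) • hankel2 Mm := by
  have hstar : a • hankel2 (hllState a b Mm Mp Fm Fp) ≤ 0 :=
    smul_nonpos_of_nonpos_of_nonneg h.nonpos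
      (hankel2_hllState_nonneg h.lt h.minus.lower h.plus.upper)
  rw [hllFlux_eq_minus h.lt, hankel2_add, hankel2_smul, hankel2_sub, smul_sub, sub_smul]
  calc
    _ ≤ b • hankel2 Mm + (0 - a • hankel2 Mm) :=
      add_le_add h.minus.upper (sub_le_sub_right hstar _)
    _ = b • hankel2 Mm - a • hankel2 Mm := by abel

lemma neg_smul_le_hankel2_hllFlux (h : IsHLLInterface a b Mm Mp Fm Fp) :
    -((b - a) • hankel2 Mp) ≤ hankel2 (hllFlux b a Mm Mp Fm Fp) := by
  have hstar : 0 ≤ b • hankel2 (hllState a b Mm Mp Fm Fp) :=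
    smul_nonneg h.nonneg (hankel2_hllState_nonneg h.lt h.minus.lower h.plus.upper)
  rw [hllFlux_eq_plus h.lt, hankel2_add, hankel2_smul, hankel2_sub, smul_sub, sub_smul]
  calc
    _ = a • hankel2 Mp + (0 - b • hankel2 Mp) := by abel
    _ ≤ _ := add_le_add h.plus.lower (sub_le_sub_right hstar _)

end IsHLLInterface

end HLL

lemma posDef_half_update {n 𝕜 : Type*} [RCLike 𝕜] {lam δ Δt μ : ℝ} (hlam : 0 ≤ lam)
    (hΔt : 0 ≤ Δt) (hμ : 0 < μ) {M G S : Matrix n n 𝕜} (hM : M.PosDef) (hG : -(δ • M) ≤ G)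
    (hS : (M + μ • S).PosSemidef) (hCFL : lam * δ + Δt / (2 * μ) < 1 / 2) :
    ((1 / 2 : ℝ) • M + lam • G + (Δt / 2) • S).PosDef := by
  have hflux : (lam • (G + δ • M)).PosSemidef := (neg_le_iff_add_nonneg.1 hG).posSemidef.smul hlam
  have hsource : ((Δt / (2 * μ)) • (M + μ • S)).PosSemidef := hS.smul (by positivity)
  have hsplit : (1 / 2 : ℝ) • M + lam • G + (Δt / 2) • S =
      (1 / 2 - (lam * δ + Δt / (2 * μ))) • M +
        (lam • (G + δ • M) + (Δt / (2 * μ)) • (M + μ • S)) := by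
    have hΔtμ : Δt / 2 = Δt / (2 * μ) * μ := by field_simp
    rw [hΔtμ]
    module
  rw [hsplit]
  exact (hM.smul (sub_pos.2 hCFL)).add_posSemidef (hflux.add hsource)

theorem hyqmom_hll_bgk_update_posDef_general {lam Δt μ aL bL aR bR : ℝ}
    {MLm MLp FLm FLp MRm MRp FRm FRp SL SR : Fin 5 → ℝ}
    (hlam : 0 ≤ lam) (hΔt : 0 ≤ Δt) (hμ : 0 < μ)
    (hL : IsHLLInterface aL bL MLm MLp FLm FLp) (hR : IsHLLInterface aR bR MRm MRp FRm FRp)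
    (hMLp : (hankel2 MLp).PosDef) (hMRm : (hankel2 MRm).PosDef)
    (hSL : (hankel2 (MLp + μ • SL)).PosSemidef) (hSR : (hankel2 (MRm + μ • SR)).PosSemidef)
    (hCFL_L : lam * (bL - aL) + Δt / (2 * μ) < 1 / 2)
    (hCFL_R : lam * (bR - aR) + Δt / (2 * μ) < 1 / 2) :
    (hankel2 (fun k => (MLp k + MRm k) / 2
        - lam * (hllFlux bR aR MRm MRp FRm FRp k - hllFlux bL aL MLm MLp FLm FLp k)
        + Δt / 2 * (SL k + SR k))).PosDef := by
  have hleft := posDef_half_update (S := hankel2 SL) hlam hΔt hμ hMLp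
    hL.neg_smul_le_hankel2_hllFlux hSL hCFL_L
  have hright := posDef_half_update (S := hankel2 SR) hlam hΔt hμ hMRm
    (neg_le_neg hR.hankel2_hllFlux_le) hSR hCFL_R
  refine (congrArg PosDef ?_).mpr (hleft.add hright)
  ext i j
  simp only [hankel2, of_apply, Matrix.add_apply, Matrix.neg_apply, Matrix.smul_apply, smul_eq_mul]
  ring

namespace HyqParams

variable (W : HyqParams)

/-- The weights of a HyQMOM state as a family, to view it as a quadrature. -/
def weight : Fin 3 → ℝ := ![W.r1, W.r2, W.r3]

/-- The abscissas of a HyQMOM state as a family, to view it as a quadrature. -/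
def node : Fin 3 → ℝ := ![W.v1, W.v2, W.v3]

lemma weight_pos (i : Fin 3) : 0 < W.weight i := by
  fin_cases i
  exacts [W.hr1, W.hr2, W.hr3]

lemma node_strictMono : StrictMono W.node := by
  refine Fin.strictMono_iff_lt_succ.2 fun i => ?_
  fin_cases i
  exacts [W.h12, W.h23]

lemma node_mem_Icc (i : Fin 3) : W.node i ∈ Set.Icc W.dm W.dp := by
  fin_cases i <;> simp [node, dm, dp]

lemma M_eq_quadratureMoments : W.M = quadratureMoments W.weight W.node := by
  ext k
  simp [M, quadratureMoments, weight, node, Fin.sum_univ_three]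

lemma F_eq_quadratureMoments : W.F = quadratureMoments (W.weight * W.node) W.node := by
  ext k
  simp [F, quadratureMoments, weight, node, Fin.sum_univ_three, pow_succ', mul_assoc]

lemma hankel2_M_posDef : (hankel2 W.M).PosDef := by
  rw [M_eq_quadratureMoments]
  exact hankel2_quadratureMoments_posDef (e := id) W.node_strictMono.injective W.weight_pos

lemma waveSpeedsIn {a b : ℝ} (ha : a ≤ W.dm) (hb : W.dp ≤ b) : WaveSpeedsIn a b W.M W.F := by
  rw [M_eq_quadratureMoments, F_eq_quadratureMoments]
  exact waveSpeedsIn_quadratureMoments (fun i => (W.weight_pos i).le)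
    fun i => Set.Icc_subset_Icc ha hb (W.node_mem_Icc i)

lemma dm_lt_dp : W.dm < W.dp :=
  calc
    W.dm ≤ W.node 0 := (W.node_mem_Icc 0).1
    _ < W.node 1 := W.node_strictMono Fin.zero_lt_one
    _ ≤ W.dp := (W.node_mem_Icc 1).2

lemma isHLLInterface (Wm Wp : HyqParams) :
    IsHLLInterface (min Wm.dm Wp.dm) (max Wm.dp Wp.dp) Wm.M Wp.M Wm.F Wp.F where
  lt := (min_le_left _ _).trans_lt (Wm.dm_lt_dp.trans_le (le_max_left _ _))
  nonpos := (min_le_left _ _).trans (min_le_right _ _)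
  nonneg := (le_max_right _ _).trans (le_max_left _ _)
  minus := Wm.waveSpeedsIn (min_le_left _ _) (le_max_left _ _)
  plus := Wp.waveSpeedsIn (min_le_right _ _) (le_max_right _ _)

end HyqParams

/-- realizability of the explicit-BGK HLL finite-volume update for the
three-point HyQMOM closure.  If `μ > 0` keeps `H₂(M_L⁺ + μS(M_L⁺))` and `H₂(M_R⁻ + μS(M_R⁻))`
positive semidefinite, and `λ(δ⁺ − δ⁻) + Δt/μ < 1/2` at both interfaces (`λ = Δt/Δx`), then
`H₂(M_new)` is positive definite, where
`M_new = ½(M_L⁺ + M_R⁻) − λ(F̂_R − F̂_L) + (Δt/2)(S(M_L⁺) + S(M_R⁻))`. -/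
theorem hyqmom_hll_bgk_update_posDef (Δt Δx lam τ μ : ℝ)
    (hΔt : 0 < Δt) (hΔx : 0 < Δx) (hlam : lam = Δt / Δx) (hτ : 0 < τ) (hμ : 0 < μ)
    (WLm WLp WRm WRp : HyqParams)
    (dLp dLm dRp dRm : ℝ)
    (hdLp : dLp = max WLm.dp WLp.dp)
    (hdLm : dLm = min WLm.dm WLp.dm)
    (hdRp : dRp = max WRm.dp WRp.dp)
    (hdRm : dRm = min WRm.dm WRp.dm)
    (FL FR : Fin 5 → ℝ)
    (hFL : FL = hllFlux dLp dLm WLm.M WLp.M WLm.F WLp.F)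
    (hFR : FR = hllFlux dRp dRm WRm.M WRp.M WRm.F WRp.F)
    (hrealL : (hankel2 (fun k => WLp.M k + μ * bgkSource τ WLp.M k)).PosSemidef)
    (hrealR : (hankel2 (fun k => WRm.M k + μ * bgkSource τ WRm.M k)).PosSemidef)
    (hCFL_L : lam * (dLp - dLm) + Δt / μ < 1 / 2)
    (hCFL_R : lam * (dRp - dRm) + Δt / μ < 1 / 2) :
    (hankel2 (fun k => (WLp.M k + WRm.M k) / 2 - lam * (FR k - FL k)
        + Δt / 2 * (bgkSource τ WLp.M k + bgkSource τ WRm.M k))).PosDef := by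
  subst hlam hdLp hdLm hdRp hdRm hFL hFR
  have hhalf : Δt / (2 * μ) ≤ Δt / μ := by gcongr; linarith
  exact hyqmom_hll_bgk_update_posDef_general (by positivity) hΔt.le hμ
    (WLm.isHLLInterface WLp) (WRm.isHLLInterface WRp) WLp.hankel2_M_posDef WRm.hankel2_M_posDef
    hrealL hrealR (by linarith) (by linarith)
end
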